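/- Suppose the primitive set ℬ ⊆ ℕ is taut and contains an infinite pairwise coprime subset. Then X_η is hereditary: whenever x ∈ X_η and y ∈ {0,1}^ℤ satisfy y(n) ≤ x(n) for all n ∈ ℤ, then y ∈ X_η. -/

import Mathlib

open Filter Set Topology MeasureTheory

open scoped Classical

noncomputable section

/-- The set of multiples `M_B ⊆ ℤ` of a set `B ⊆ ℕ`. -/
def multiplesZ (B : Set ℕ) : Set ℤ := {n : ℤ | ∃ b ∈ B, (b : ℤ) ∣ n}

/-- The `B`-free integers `F_B = ℤ ∖ M_B`. -/
def freeZ (B : Set ℕ) : Set ℤ := (multiplesZ B)ᶜ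

/-- The logarithmically weighted averages `(1/log n) ∑_{k=1}^n 1_A(k)/k`. -/
def logWeight (A : Set ℤ) (n : ℕ) : ℝ :=
  (Real.log n)⁻¹ * ∑ k ∈ Finset.Icc 1 n, A.indicator (fun m : ℤ => ((m : ℝ))⁻¹) (k : ℤ)

/-- The lower logarithmic density of a set `A ⊆ ℤ`. -/
def logDensLow (A : Set ℤ) : ℝ := liminf (logWeight A) atTop

/-- `A ⊆ ℤ` has logarithmic density `d`. -/
def HasLogDensity (A : Set ℤ) (d : ℝ) : Prop := Tendsto (logWeight A) atTop (𝓝 d)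

/-- `B` is primitive: no element divides another one. -/
def Primitive (B : Set ℕ) : Prop := ∀ b ∈ B, ∀ b' ∈ B, b ∣ b' → b = b'

/-- `B` is Behrend: its set of multiples has logarithmic density one. -/
def IsBehrend (B : Set ℕ) : Prop := logDensLow (multiplesZ B) = 1

/-- `B` is taut: removing any element strictly decreases the logarithmic density
of the set of multiples. -/
def IsTaut (B : Set ℕ) : Prop :=
  ∀ b ∈ B, logDensLow (multiplesZ (B \ {b})) < logDensLow (multiplesZ B)

/-- `B̃^(N)`: the elements of `B` having no prime factor `≤ N`. -/
def Btilde (B : Set ℕ) (N : ℕ) : Set ℕ := {b ∈ B | ∀ p : ℕ, p.Prime → p ∣ b → N < p}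

/-- `B^(N)`: the elements of `B` all of whose prime factors are `≤ N`. -/
def Bsmooth (B : Set ℕ) (N : ℕ) : Set ℕ := {b ∈ B | ∀ p : ℕ, p.Prime → p ∣ b → p ≤ N}

/-- `η ∈ {0,1}^ℤ`, the indicator function of the `B`-free integers. -/
def eta (B : Set ℕ) : ℤ → Bool := fun n => decide (n ∈ freeZ B)

/-- `X_η`, the orbit closure of `η` under the left shift on `{0,1}^ℤ`. -/
def Xeta (B : Set ℕ) : Set (ℤ → Bool) :=
  closure (Set.range fun m : ℤ => fun n : ℤ => eta B (n + m))

/-!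
Averaging with weights `1 / k` along an ultrafilter gives a finitely additive shift-invariant mean
on the subsets of `ℤ`. Mertens' product bound makes this mean continuous along the finite subsets
of `C` for the set of multiples `M_C` (Davenport–Erdős), so the multiples of the tails `C̃^(N)`
satisfy a zero–one law: their mean either is `1` for every `N` or tends to `0`. If `d ∉ B`,
tautness rules out the first case for `C = {c | d * c ∈ B}`.

Now let `A` be a finite set of `B`-free integers and `Z` a finite set disjoint from `A`. The Chinese
remainder theorem, applied to elements of `B` coprime to each other and to `N!`, gives a residue
class of integers `m` divisible by `N! * N!` such that `n + m ∈ M_B` for all `n ∈ Z`. For such `m`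
and `n ∈ A`, any `b ∈ B` dividing `n + m` factors as `d * c`, where `d ∣ n` and `c` is coprime to
the modulus and lies in the tail of `{c | d * c ∈ B}`. As these tails have multiples of small mean,
and coprimality makes them independent of the residue class, some `m` in the class avoids them all.
-/

/-! ### An upper bound in the theorem of Mertens -/

lemma prod_primesLE_pow_div_dvd_factorial (n : ℕ) :
    (∏ p ∈ Nat.primesLE n, p ^ (n / p)) ∣ n.factorial := by
  apply Finset.prod_dvd_of_isRelPrime
  · intro p hp q hq hpq
    rw [Function.onFun, ← Nat.coprime_iff_isRelPrime]
    exact Nat.Coprime.pow _ _ ((Nat.coprime_primes (Nat.prime_of_mem_primesLE hp)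
      (Nat.prime_of_mem_primesLE hq)).2 hpq)
  · intro p hp
    rw [(Nat.prime_of_mem_primesLE hp).pow_dvd_factorial_iff (b := Nat.log p n + 2) (by omega)]
    calc n / p = n / p ^ 1 := by rw [pow_one]
      _ ≤ _ := Finset.single_le_sum (f := fun i ↦ n / p ^ i) (fun i _ ↦ Nat.zero_le _) (by simp)

lemma sum_primesLE_div_mul_log_le (n : ℕ) :
    ∑ p ∈ Nat.primesLE n, ((n / p : ℕ) : ℝ) * Real.log p ≤ n * Real.log n := by
  have hpos : ∀ p ∈ Nat.primesLE n, 0 < p := fun p hp ↦ (Nat.prime_of_mem_primesLE hp).pos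
  have hle : ∏ p ∈ Nat.primesLE n, p ^ (n / p) ≤ n ^ n :=
    (Nat.le_of_dvd n.factorial_pos (prod_primesLE_pow_div_dvd_factorial n)).trans
      n.factorial_le_pow
  calc ∑ p ∈ Nat.primesLE n, ((n / p : ℕ) : ℝ) * Real.log p
      = Real.log ((∏ p ∈ Nat.primesLE n, p ^ (n / p) : ℕ) : ℝ) := by
        push_cast
        rw [Real.log_prod fun p hp ↦ pow_ne_zero _ (Nat.cast_ne_zero.2 (hpos p hp).ne')]
        simp only [Real.log_pow]
    _ ≤ Real.log ((n : ℝ) ^ n) := by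
        apply Real.log_le_log
        · exact_mod_cast Finset.prod_pos fun p hp ↦ pow_pos (hpos p hp) _
        · exact_mod_cast hle
    _ = n * Real.log n := Real.log_pow n n

lemma sum_primesLE_log_div_le (n : ℕ) :
    ∑ p ∈ Nat.primesLE n, Real.log p / p ≤ Real.log n + Real.log 4 := by
  rcases n.eq_zero_or_pos with rfl | hn
  · simpa using Real.log_nonneg (by norm_num : (1 : ℝ) ≤ 4)
  have hn0 : (0 : ℝ) < n := by exact_mod_cast hn
  have hchebyshev : ∑ p ∈ Nat.primesLE n, Real.log p ≤ Real.log 4 * n := by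
    simpa [Chebyshev.theta_eq_sum_primesLE_log] using Chebyshev.theta_le_log4_mul_x hn0.le
  have hterm : ∀ p ∈ Nat.primesLE n,
      n * (Real.log p / p) ≤ ((n / p : ℕ) : ℝ) * Real.log p + Real.log p := by
    intro p _
    have hfloor : (n : ℝ) / p ≤ ((n / p : ℕ) : ℝ) + 1 := by
      rw [← Nat.floor_div_eq_div (K := ℝ)]
      exact (Nat.lt_floor_add_one _).le
    calc (n : ℝ) * (Real.log p / p) = n / p * Real.log p := by ring
      _ ≤ (((n / p : ℕ) : ℝ) + 1) * Real.log p :=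
        mul_le_mul_of_nonneg_right hfloor (Real.log_natCast_nonneg p)
      _ = _ := by ring
  have hsum := Finset.sum_le_sum hterm
  rw [← Finset.mul_sum, Finset.sum_add_distrib] at hsum
  refine le_of_mul_le_mul_left ?_ hn0
  linarith [sum_primesLE_div_mul_log_le n]

lemma tsum_natCast_rpow_neg_le {s : ℝ} (hs : 1 < s) :
    ∑' n : ℕ, (n : ℝ) ^ (-s) ≤ 1 + 1 / (s - 1) := by
  have hsum : Summable fun n : ℕ ↦ (n : ℝ) ^ (-s) := Real.summable_nat_rpow.2 (by linarith)
  have hzero : ((0 : ℕ) : ℝ) ^ (-s) = 0 := by rw [Nat.cast_zero, Real.zero_rpow (by linarith)]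
  have hshift : ∑' n : ℕ, ((n + 1 : ℕ) : ℝ) ^ (-s) = ∑' n : ℕ, 1 / (n + 1 : ℝ) ^ s :=
    tsum_congr fun n ↦ by
      rw [Real.rpow_neg (by positivity), one_div]
      push_cast
      rfl
  have hterm : 0 ≤ s * ZetaAsymptotics.termTSum s :=
    mul_nonneg (by linarith) (tsum_nonneg fun n ↦ ZetaAsymptotics.term_nonneg _ _)
  rw [hsum.tsum_eq_zero_add, hzero, hshift]
  linarith [ZetaAsymptotics.zeta_limit_aux1 hs]

lemma prod_primesLE_one_sub_rpow_neg_inv_le {s : ℝ} (hs : 1 < s) (n : ℕ) :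
    ∏ p ∈ Nat.primesLE n, (1 - (p : ℝ) ^ (-s))⁻¹ ≤ 1 + 1 / (s - 1) := by
  have hsum : Summable fun n : ℕ ↦ (n : ℝ) ^ (-s) := Real.summable_nat_rpow.2 (by linarith)
  let f : ℕ →* ℝ :=
    { toFun := fun n ↦ (n : ℝ) ^ (-s)
      map_one' := by simp
      map_mul' := fun a b ↦ by
        push_cast
        exact Real.mul_rpow a.cast_nonneg b.cast_nonneg }
  calc ∏ p ∈ Nat.primesLE n, (1 - (p : ℝ) ^ (-s))⁻¹
      = ∑' m : (n + 1).smoothNumbers, (m : ℝ) ^ (-s) :=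
        EulerProduct.prod_primesBelow_geometric_eq_tsum_smoothNumbers (f := f) hsum (n + 1)
    _ ≤ ∑' m : ℕ, (m : ℝ) ^ (-s) :=
        hsum.tsum_subtype_le (fun m : ℕ ↦ (m : ℝ) ^ (-s)) _ fun m ↦ by positivity
    _ ≤ 1 + 1 / (s - 1) := tsum_natCast_rpow_neg_le hs

lemma one_sub_inv_inv_le_mul_exp {x L : ℝ} (hx : 2 ≤ x) (hL : 0 < L) :
    (1 - x⁻¹)⁻¹ ≤ (1 - x ^ (-(1 + 1 / L)))⁻¹ * Real.exp (2 / L * (Real.log x / x)) := by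
  have hx0 : 0 < x := by linarith
  have hinv : x⁻¹ ≤ 1 / 2 := by
    rw [one_div]
    exact inv_anti₀ two_pos hx
  have hpow_lt : x ^ (-(1 + 1 / L)) < 1 :=
    Real.rpow_lt_one_of_one_lt_of_neg (by linarith) (neg_neg_of_pos (by positivity))
  have hpow : x⁻¹ * (1 - Real.log x / L) ≤ x ^ (-(1 + 1 / L)) := by
    rw [neg_add, Real.rpow_add hx0, Real.rpow_neg_one, Real.rpow_def_of_pos hx0]
    gcongr
    calc 1 - Real.log x / L = Real.log x * -(1 / L) + 1 := by ring
      _ ≤ _ := Real.add_one_le_exp _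
  have hu : 0 ≤ x⁻¹ * (Real.log x / L) := by
    have := Real.log_nonneg (by linarith : 1 ≤ x)
    positivity
  rw [inv_mul_eq_div, le_div_iff₀ (by linarith), inv_mul_le_iff₀ (by linarith)]
  calc 1 - x ^ (-(1 + 1 / L)) ≤ 1 - x⁻¹ + x⁻¹ * (Real.log x / L) := by linarith
    _ ≤ (1 - x⁻¹) * (2 * (x⁻¹ * (Real.log x / L)) + 1) := by nlinarith
    _ ≤ (1 - x⁻¹) * Real.exp (2 * (x⁻¹ * (Real.log x / L))) :=
      mul_le_mul_of_nonneg_left (Real.add_one_le_exp _) (by linarith)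
    _ = (1 - x⁻¹) * Real.exp (2 / L * (Real.log x / x)) := by ring_nf

lemma prod_primesLE_one_sub_inv_inv_le (n : ℕ) {L : ℝ} (hL : 0 < L) :
    ∏ p ∈ Nat.primesLE n, (1 - (p : ℝ)⁻¹)⁻¹ ≤
      (1 + L) * Real.exp (2 / L * (Real.log n + Real.log 4)) := by
  calc ∏ p ∈ Nat.primesLE n, (1 - (p : ℝ)⁻¹)⁻¹
      ≤ ∏ p ∈ Nat.primesLE n, ((1 - (p : ℝ) ^ (-(1 + 1 / L)))⁻¹ *
          Real.exp (2 / L * (Real.log p / p))) := by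
        refine Finset.prod_le_prod (fun p hp ↦ inv_nonneg.2 (sub_nonneg.2 ?_)) fun p hp ↦
          one_sub_inv_inv_le_mul_exp (by exact_mod_cast Nat.two_le_of_mem_primesLE hp) hL
        exact inv_le_one_of_one_le₀ (by exact_mod_cast (Nat.prime_of_mem_primesLE hp).one_le)
    _ = (∏ p ∈ Nat.primesLE n, (1 - (p : ℝ) ^ (-(1 + 1 / L)))⁻¹) *
          Real.exp (2 / L * ∑ p ∈ Nat.primesLE n, Real.log p / p) := by
        rw [Finset.prod_mul_distrib, Finset.mul_sum, Real.exp_sum]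
    _ ≤ (1 + 1 / ((1 + 1 / L) - 1)) * Real.exp (2 / L * (Real.log n + Real.log 4)) := by
        gcongr
        · simp only [add_sub_cancel_left, one_div_one_div]
          linarith
        · exact prod_primesLE_one_sub_rpow_neg_inv_le (lt_add_of_pos_right 1 (by positivity)) n
        · exact sum_primesLE_log_div_le n
    _ = (1 + L) * Real.exp (2 / L * (Real.log n + Real.log 4)) := by
        rw [add_sub_cancel_left, one_div_one_div]

lemma exists_prod_primesLE_one_sub_inv_inv_le_mul_log : ∃ K : ℝ, 0 < K ∧ ∀ n : ℕ, 3 ≤ n →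
    ∏ p ∈ Nat.primesLE n, (1 - (p : ℝ)⁻¹)⁻¹ ≤ K * Real.log n := by
  refine ⟨2 * Real.exp (2 + 2 * Real.log 4), by positivity, fun n hn ↦ ?_⟩
  have hn3 : (3 : ℝ) ≤ n := by exact_mod_cast hn
  have hlog : 1 ≤ Real.log n := by
    rw [Real.le_log_iff_exp_le (by positivity)]
    linarith [Real.exp_one_lt_d9]
  have hlog4 : 2 / Real.log n * Real.log 4 ≤ 2 * Real.log 4 :=
    mul_le_mul_of_nonneg_right (div_le_self two_pos.le hlog) (Real.log_nonneg (by norm_num))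
  calc ∏ p ∈ Nat.primesLE n, (1 - (p : ℝ)⁻¹)⁻¹
      ≤ (1 + Real.log n) * Real.exp (2 / Real.log n * (Real.log n + Real.log 4)) :=
        prod_primesLE_one_sub_inv_inv_le n (by linarith)
    _ ≤ (2 * Real.log n) * Real.exp (2 + 2 * Real.log 4) := by
        rw [mul_add, div_mul_cancel₀ _ (by linarith : Real.log n ≠ 0)]
        gcongr
        linarith
    _ = 2 * Real.exp (2 + 2 * Real.log 4) * Real.log n := by ring

/-! ### Finitely additive invariant means on the integers -/

/-- A finitely additive probability on all subsets of `ℤ` that is invariant under translation. -/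
structure IsInvariantMean (μ : Set ℤ → ℝ) : Prop where
  nonneg : ∀ A, 0 ≤ μ A
  map_univ : μ univ = 1
  map_union : ∀ A C, Disjoint A C → μ (A ∪ C) = μ A + μ C
  map_preimage_add : ∀ (A : Set ℤ) (j : ℤ), μ ((· + j) ⁻¹' A) = μ A

lemma mem_iff_of_modEq {A : Set ℤ} {q m n : ℤ} (hA : Function.Periodic (· ∈ A) q)
    (h : m ≡ n [ZMOD q]) : m ∈ A ↔ n ∈ A := by
  obtain ⟨t, rfl⟩ := Int.modEq_iff_add_fac.1 h
  rw [mul_comm]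
  exact (hA.int_mul t m).symm.to_iff

lemma periodic_mem_univ (q : ℤ) : Function.Periodic (· ∈ (univ : Set ℤ)) q := fun _ ↦ rfl

lemma existsUnique_lt_modEq {q : ℕ} (hq : 0 < q) (n : ℤ) :
    ∃! r : ℕ, r < q ∧ n ≡ r [ZMOD q] := by
  have hq0 : (q : ℤ) ≠ 0 := by exact_mod_cast hq.ne'
  refine ⟨(n % q).toNat, ⟨?_, ?_⟩, ?_⟩
  · have := Int.emod_lt_of_pos n (by exact_mod_cast hq : (0 : ℤ) < q)
    omega
  · rw [Int.toNat_of_nonneg (Int.emod_nonneg n hq0)]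
    exact (Int.mod_modEq n q).symm
  · rintro r ⟨hr, hnr⟩
    rw [hnr.eq, Int.emod_eq_of_lt r.cast_nonneg (by exact_mod_cast hr), Int.toNat_natCast]

namespace IsInvariantMean

variable {μ ν : Set ℤ → ℝ} {A A' : Set ℤ} {q q' k : ℕ}

lemma map_empty (hμ : IsInvariantMean μ) : μ ∅ = 0 := by
  simpa using hμ.map_union ∅ ∅ (disjoint_empty ∅)

lemma map_sdiff (hμ : IsInvariantMean μ) (h : A ⊆ A') : μ (A' \ A) = μ A' - μ A := by
  have := hμ.map_union A (A' \ A) disjoint_sdiff_right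
  rw [union_sdiff_cancel h] at this
  linarith

lemma map_compl (hμ : IsInvariantMean μ) (A : Set ℤ) : μ Aᶜ = 1 - μ A := by
  rw [compl_eq_univ_sdiff, hμ.map_sdiff (subset_univ A), hμ.map_univ]

lemma mono (hμ : IsInvariantMean μ) (h : A ⊆ A') : μ A ≤ μ A' :=
  sub_nonneg.1 (hμ.map_sdiff h ▸ hμ.nonneg _)

lemma le_one (hμ : IsInvariantMean μ) (A : Set ℤ) : μ A ≤ 1 :=
  hμ.map_univ ▸ hμ.mono (subset_univ A)

lemma union_le (hμ : IsInvariantMean μ) (A C : Set ℤ) : μ (A ∪ C) ≤ μ A + μ C := by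
  rw [← union_sdiff_self, hμ.map_union A (C \ A) disjoint_sdiff_right]
  gcongr
  exact hμ.mono sdiff_subset

lemma biUnion_le (hμ : IsInvariantMean μ) {ι : Type*} (s : Finset ι) (f : ι → Set ℤ) :
    μ (⋃ i ∈ s, f i) ≤ ∑ i ∈ s, μ (f i) := by
  induction s using Finset.induction_on with
  | empty => simp [hμ.map_empty]
  | insert a s ha ih =>
    rw [Finset.set_biUnion_insert, Finset.sum_insert ha]
    exact (hμ.union_le _ _).trans (by gcongr)

lemma map_biUnion (hμ : IsInvariantMean μ) {ι : Type*} {s : Finset ι} {f : ι → Set ℤ}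
    (hf : (s : Set ι).PairwiseDisjoint f) : μ (⋃ i ∈ s, f i) = ∑ i ∈ s, μ (f i) := by
  induction s using Finset.induction_on with
  | empty => simp [hμ.map_empty]
  | insert a s ha ih =>
    rw [Finset.coe_insert, pairwiseDisjoint_insert_of_notMem (by simpa using ha)] at hf
    rw [Finset.set_biUnion_insert, Finset.sum_insert ha, hμ.map_union, ih hf.1]
    exact disjoint_iUnion₂_right.2 hf.2

lemma map_eq_sum_inter_modEq (hμ : IsInvariantMean μ) (hq : 0 < q) (A : Set ℤ) :
    μ A = ∑ r ∈ Finset.range q, μ (A ∩ {n | n ≡ (r : ℕ) [ZMOD q]}) := by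
  rw [← hμ.map_biUnion]
  · congr 1
    ext n
    obtain ⟨r, ⟨hr, hnr⟩, -⟩ := existsUnique_lt_modEq hq n
    simp only [mem_iUnion, Finset.mem_range, mem_inter_iff, exists_prop]
    exact ⟨fun hn ↦ ⟨r, hr, hn, hnr⟩, fun ⟨_, _, hn, _⟩ ↦ hn⟩
  · intro r hr s hs hrs
    refine disjoint_left.2 fun n hnr hns ↦ hrs ?_
    exact (existsUnique_lt_modEq hq n).unique ⟨Finset.mem_range.1 hr, hnr.2⟩
      ⟨Finset.mem_range.1 hs, hns.2⟩

lemma map_inter_of_forall_modEq (hμ : IsInvariantMean μ) (hq : 0 < q) {X : Set ℤ} {c : ℝ}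
    (hc : ∀ r : ℕ, μ (X ∩ {n | n ≡ r [ZMOD q]}) = c) (hA : Function.Periodic (· ∈ A) (q : ℤ)) :
    μ (X ∩ A) = Nat.count (fun r : ℕ ↦ (r : ℤ) ∈ A) q * c := by
  rw [hμ.map_eq_sum_inter_modEq hq, Nat.count_eq_card_filter_range, Finset.card_filter,
    Nat.cast_sum, Finset.sum_mul]
  refine Finset.sum_congr rfl fun r _ ↦ ?_
  by_cases hr : (r : ℤ) ∈ A
  · rw [if_pos hr, Nat.cast_one, one_mul, ← hc r, inter_assoc]
    congr 2
    exact inter_eq_right.2 fun n hn ↦ (mem_iff_of_modEq hA hn).2 hr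
  · rw [if_neg hr, Nat.cast_zero, zero_mul, ← hμ.map_empty, inter_assoc]
    congr 1
    exact eq_empty_of_forall_notMem fun n hn ↦ hr ((mem_iff_of_modEq hA hn.2.2).1 hn.2.1)

lemma map_inter_modEq (hμ : IsInvariantMean μ) (hq' : 0 < q') (hqq' : q.Coprime q')
    (hA : Function.Periodic (· ∈ A) (q : ℤ)) (r : ℤ) :
    μ (A ∩ {n | n ≡ r [ZMOD q']}) = μ A / q' := by
  have hshift : ∀ s : ℤ, μ (A ∩ {n | n ≡ s [ZMOD q']}) = μ (A ∩ {n | n ≡ r [ZMOD q']}) := by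
    intro s
    obtain ⟨u, v, huv⟩ := Nat.isCoprime_iff_coprime.2 hqq'
    rw [← hμ.map_preimage_add (A ∩ {n | n ≡ r [ZMOD q']}) (u * (r - s) * q)]
    congr 1
    ext n
    refine and_congr (hA.int_mul (u * (r - s)) n).symm.to_iff ?_
    have hsub : r - (n + u * (r - s) * q) = s - n + q' * (v * (r - s)) := by
      linear_combination -(r - s) * huv
    simp only [mem_ofPred_eq, Int.modEq_iff_dvd, hsub]
    exact (dvd_add_left (dvd_mul_right _ _)).symm
  have hsum := hμ.map_eq_sum_inter_modEq hq' A
  simp only [hshift, Finset.sum_const, Finset.card_range, nsmul_eq_mul] at hsum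
  rw [hsum, mul_div_cancel_left₀ _ (by exact_mod_cast hq'.ne')]

lemma map_of_periodic (hμ : IsInvariantMean μ) (hq : 0 < q)
    (hA : Function.Periodic (· ∈ A) (q : ℤ)) :
    μ A = Nat.count (fun r : ℕ ↦ (r : ℤ) ∈ A) q / q := by
  have h := hμ.map_inter_of_forall_modEq hq (X := univ) (fun r ↦
    hμ.map_inter_modEq hq (Nat.coprime_one_left q) (periodic_mem_univ _) r) hA
  rwa [univ_inter, hμ.map_univ, mul_one_div] at h

lemma eq_of_periodic (hμ : IsInvariantMean μ) (hν : IsInvariantMean ν) (hq : 0 < q)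
    (hA : Function.Periodic (· ∈ A) (q : ℤ)) : μ A = ν A := by
  rw [hμ.map_of_periodic hq hA, hν.map_of_periodic hq hA]

lemma map_inter_of_coprime (hμ : IsInvariantMean μ) (hq' : 0 < q') (hqq' : q.Coprime q')
    (hA : Function.Periodic (· ∈ A) (q : ℤ)) (hA' : Function.Periodic (· ∈ A') (q' : ℤ)) :
    μ (A ∩ A') = μ A * μ A' := by
  rw [hμ.map_inter_of_forall_modEq hq' (fun r ↦ hμ.map_inter_modEq hq' hqq' hA r) hA',
    hμ.map_of_periodic hq' hA']
  ring

lemma map_image_mul_univ (hμ : IsInvariantMean μ) (hk : 0 < k) :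
    μ (((k : ℤ) * ·) '' univ) = 1 / k := by
  have h := hμ.map_inter_modEq hk (Nat.coprime_one_left k) (periodic_mem_univ _) 0
  rw [univ_inter, hμ.map_univ] at h
  rw [← h]
  congr 1
  ext n
  simp [Int.modEq_zero_iff_dvd, dvd_def, eq_comm]

lemma scale (hμ : IsInvariantMean μ) (hk : 0 < k) :
    IsInvariantMean fun A ↦ k * μ (((k : ℤ) * ·) '' A) where
  nonneg A := mul_nonneg k.cast_nonneg (hμ.nonneg _)
  map_univ := by rw [hμ.map_image_mul_univ hk, mul_one_div_cancel (by exact_mod_cast hk.ne')]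
  map_union A C hAC := by
    have hinj := mul_right_injective₀ (Int.natCast_ne_zero.2 hk.ne')
    rw [image_union, hμ.map_union _ _ (disjoint_image_of_injective hinj hAC), mul_add]
  map_preimage_add A j := by
    rw [← hμ.map_preimage_add (((k : ℤ) * ·) '' A) (k * j)]
    congr 2
    ext n
    constructor
    · rintro ⟨a, ha, rfl⟩
      exact ⟨a + j, ha, mul_add _ _ _⟩
    · rintro ⟨a, ha, hn⟩
      refine ⟨a - j, ?_, ?_⟩
      · rwa [mem_preimage, sub_add_cancel]
      · exact (mul_sub _ _ _).trans (sub_eq_of_eq_add hn)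

lemma map_image_mul_of_periodic (hμ : IsInvariantMean μ) (hk : 0 < k) (hq : 0 < q)
    (hA : Function.Periodic (· ∈ A) (q : ℤ)) : μ (((k : ℤ) * ·) '' A) = μ A / k := by
  rw [hμ.eq_of_periodic (hμ.scale hk) hq hA, mul_div_cancel_left₀ _ (by exact_mod_cast hk.ne')]

end IsInvariantMean

/-! ### The logarithmic mean along an ultrafilter -/

lemma indicator_inv_natCast_nonneg (A : Set ℤ) (k : ℕ) :
    0 ≤ A.indicator (fun m : ℤ ↦ (m : ℝ)⁻¹) (k : ℤ) :=
  indicator_apply_nonneg fun _ ↦ by positivity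

lemma logWeight_nonneg (A : Set ℤ) (n : ℕ) : 0 ≤ logWeight A n :=
  mul_nonneg (inv_nonneg.2 (Real.log_natCast_nonneg n))
    (Finset.sum_nonneg fun k _ ↦ indicator_inv_natCast_nonneg A k)

lemma logWeight_union {A C : Set ℤ} (hAC : Disjoint A C) (n : ℕ) :
    logWeight (A ∪ C) n = logWeight A n + logWeight C n := by
  simp only [logWeight, indicator_union_of_disjoint hAC, Finset.sum_add_distrib, mul_add]

lemma logWeight_mono {A C : Set ℤ} (hAC : A ⊆ C) (n : ℕ) : logWeight A n ≤ logWeight C n := by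
  rw [← union_sdiff_cancel hAC, logWeight_union disjoint_sdiff_right]
  exact le_add_of_nonneg_right (logWeight_nonneg _ n)

lemma tendsto_inv_log_natCast : Tendsto (fun n : ℕ ↦ (Real.log n)⁻¹) atTop (𝓝 0) :=
  (Real.tendsto_log_atTop.comp tendsto_natCast_atTop_atTop).inv_tendsto_atTop

lemma logWeight_univ (n : ℕ) : logWeight univ n = (Real.log n)⁻¹ * (harmonic n : ℝ) := by
  rw [logWeight, harmonic_eq_sum_Icc]
  simp

lemma tendsto_logWeight_univ : Tendsto (logWeight univ) atTop (𝓝 1) := by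
  have hupper : Tendsto (fun n : ℕ ↦ (Real.log n)⁻¹ + 1) atTop (𝓝 1) := by
    simpa using tendsto_inv_log_natCast.add_const 1
  refine tendsto_of_tendsto_of_tendsto_of_le_of_le' tendsto_const_nhds hupper ?_ ?_
  all_goals
    filter_upwards [eventually_ge_atTop 2] with n hn
    have hlog : 0 < Real.log n := Real.log_pos (by exact_mod_cast hn)
    rw [logWeight_univ]
  · rw [le_inv_mul_iff₀ hlog, mul_one]
    refine (Real.log_le_log (by positivity) ?_).trans (log_add_one_le_harmonic n)
    exact_mod_cast n.le_succ
  · rw [inv_mul_le_iff₀ hlog, mul_add, mul_inv_cancel₀ hlog.ne', mul_one]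
    exact harmonic_le_one_add_log n

lemma logWeight_le_inv_log_add_logWeight_preimage_add_one (A : Set ℤ) (n : ℕ) :
    logWeight A n ≤ (Real.log n)⁻¹ + logWeight ((· + 1) ⁻¹' A) n := by
  set f : ℤ → ℝ := fun m ↦ (m : ℝ)⁻¹
  have hshift : ∀ n : ℕ, ∑ k ∈ Finset.Icc 1 (n + 1), A.indicator f (k : ℤ) ≤
      1 + ∑ k ∈ Finset.Icc 1 n, ((· + 1) ⁻¹' A).indicator f (k : ℤ) := by
    intro n
    induction n with
    | zero => simpa [f] using indicator_apply_le' (fun _ ↦ by simp) fun _ ↦ zero_le_one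
    | succ n ih =>
      have hstep : A.indicator f ((n + 1 + 1 : ℕ) : ℤ) ≤
          ((· + 1) ⁻¹' A).indicator f ((n + 1 : ℕ) : ℤ) := by
        by_cases h : ((n + 1 + 1 : ℕ) : ℤ) ∈ A
        · rw [indicator_of_mem h, indicator_of_mem (by simpa using h)]
          simp only [f, Int.cast_natCast]
          gcongr
          exact Nat.le_succ _
        · rw [indicator_of_notMem h]
          exact indicator_inv_natCast_nonneg _ _
      simp only [Finset.sum_Icc_succ_top (Nat.le_add_left 1 _)] at ih ⊢
      linarith
  rw [logWeight, logWeight, ← mul_one_add]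
  refine mul_le_mul_of_nonneg_left (le_trans ?_ (hshift n))
    (inv_nonneg.2 (Real.log_natCast_nonneg n))
  rw [Finset.sum_Icc_succ_top (by omega)]
  exact le_add_of_nonneg_right (indicator_inv_natCast_nonneg A (n + 1))

/-- The limit along the ultrafilter `𝒰` of the logarithmic averages of a set `A`. It exists as soon
as `𝒰 ≤ atTop` and then defines an invariant mean; `limUnder` is used to have it total in `𝒰`. -/
def logMean (𝒰 : Ultrafilter ℕ) (A : Set ℤ) : ℝ := limUnder (𝒰 : Filter ℕ) (logWeight A)

section LogMean

variable {𝒰 : Ultrafilter ℕ}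

lemma tendsto_logMean (h𝒰 : (𝒰 : Filter ℕ) ≤ atTop) (A : Set ℤ) :
    Tendsto (logWeight A) 𝒰 (𝓝 (logMean 𝒰 A)) := by
  have hbound : ∀ᶠ n in (𝒰 : Filter ℕ), logWeight A n ∈ Icc (0 : ℝ) 2 := by
    filter_upwards [(tendsto_logWeight_univ.mono_left h𝒰).eventually_le_const one_lt_two]
      with n hn
    exact ⟨logWeight_nonneg A n, (logWeight_mono (subset_univ A) n).trans hn⟩
  obtain ⟨x, -, hx⟩ := isCompact_Icc.ultrafilter_le_nhds (𝒰.map (logWeight A))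
    (le_principal_iff.2 hbound)
  exact tendsto_nhds_limUnder ⟨x, hx⟩

lemma HasLogDensity.logMean_eq {A : Set ℤ} {d : ℝ} (h : HasLogDensity A d)
    (h𝒰 : (𝒰 : Filter ℕ) ≤ atTop) : logMean 𝒰 A = d :=
  tendsto_nhds_unique (tendsto_logMean h𝒰 A) (h.mono_left h𝒰)

lemma logMean_union (h𝒰 : (𝒰 : Filter ℕ) ≤ atTop) {A C : Set ℤ} (hAC : Disjoint A C) :
    logMean 𝒰 (A ∪ C) = logMean 𝒰 A + logMean 𝒰 C := by
  refine tendsto_nhds_unique (tendsto_logMean h𝒰 (A ∪ C)) ?_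
  exact ((tendsto_logMean h𝒰 A).add (tendsto_logMean h𝒰 C)).congr fun n ↦
    (logWeight_union hAC n).symm

lemma logMean_univ (h𝒰 : (𝒰 : Filter ℕ) ≤ atTop) : logMean 𝒰 univ = 1 :=
  HasLogDensity.logMean_eq tendsto_logWeight_univ h𝒰

lemma logMean_compl (h𝒰 : (𝒰 : Filter ℕ) ≤ atTop) (A : Set ℤ) :
    logMean 𝒰 Aᶜ = 1 - logMean 𝒰 A := by
  rw [← logMean_univ h𝒰, ← union_compl_self A, logMean_union h𝒰 disjoint_compl_right,
    add_sub_cancel_left]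

lemma logMean_le_preimage_add_one (h𝒰 : (𝒰 : Filter ℕ) ≤ atTop) (A : Set ℤ) :
    logMean 𝒰 A ≤ logMean 𝒰 ((· + 1) ⁻¹' A) := by
  refine le_of_tendsto_of_tendsto' (tendsto_logMean h𝒰 A) ?_
    (logWeight_le_inv_log_add_logWeight_preimage_add_one A)
  simpa using (tendsto_inv_log_natCast.mono_left h𝒰).add (tendsto_logMean h𝒰 ((· + 1) ⁻¹' A))

lemma logMean_preimage_add_one (h𝒰 : (𝒰 : Filter ℕ) ≤ atTop) (A : Set ℤ) :
    logMean 𝒰 ((· + 1) ⁻¹' A) = logMean 𝒰 A := by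
  refine (logMean_le_preimage_add_one h𝒰 A).antisymm' ?_
  have h := logMean_le_preimage_add_one h𝒰 Aᶜ
  rw [preimage_compl, logMean_compl h𝒰, logMean_compl h𝒰] at h
  linarith

theorem isInvariantMean_logMean (h𝒰 : (𝒰 : Filter ℕ) ≤ atTop) :
    IsInvariantMean (logMean 𝒰) where
  nonneg A := ge_of_tendsto' (tendsto_logMean h𝒰 A) (logWeight_nonneg A)
  map_univ := logMean_univ h𝒰
  map_union _ _ := logMean_union h𝒰
  map_preimage_add A j := by
    induction j using Int.induction_on with
    | zero => simp
    | succ i ih =>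
      rw [← ih, ← logMean_preimage_add_one h𝒰 ((· + (i : ℤ)) ⁻¹' A), preimage_preimage]
      simp only [add_right_comm, add_assoc]
    | pred i ih =>
      rw [← ih, ← logMean_preimage_add_one h𝒰 ((· + (-(i : ℤ) - 1)) ⁻¹' A), preimage_preimage]
      simp only [add_assoc, add_sub_cancel]

end LogMean

/-! ### The theorem of Davenport and Erdős -/

lemma multiplesZ_mono {C D : Set ℕ} (h : C ⊆ D) : multiplesZ C ⊆ multiplesZ D :=
  fun _ ⟨b, hb, hn⟩ ↦ ⟨b, h hb, hn⟩

lemma periodic_mem_multiplesZ {C : Set ℕ} {q : ℤ} (hC : ∀ b ∈ C, (b : ℤ) ∣ q) :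
    Function.Periodic (· ∈ multiplesZ C) q := fun _ ↦
  propext (exists_congr fun b ↦ and_congr_right fun hb ↦ dvd_add_left (hC b hb))

lemma periodic_mem_multiplesZ_coe_finset (F : Finset ℕ) :
    Function.Periodic (· ∈ multiplesZ F) ((∏ b ∈ F, b : ℕ) : ℤ) :=
  periodic_mem_multiplesZ fun _ hb ↦ Int.natCast_dvd_natCast.2 (Finset.dvd_prod_of_mem _ hb)

lemma mul_mem_multiplesZ_sdiff {C D : Set ℕ} {k w N : ℤ} (hD : ∀ b ∈ D, (b : ℤ) ∣ N)
    (hk : k ∈ multiplesZ C \ multiplesZ D) (hw : IsCoprime w N) :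
    k * w ∈ multiplesZ C \ multiplesZ D := by
  obtain ⟨⟨c, hc, hck⟩, hkD⟩ := hk
  refine ⟨⟨c, hc, hck.mul_right w⟩, fun ⟨b, hb, hbkw⟩ ↦ hkD ⟨b, hb, ?_⟩⟩
  exact (hw.of_isCoprime_of_dvd_right (hD b hb)).symm.dvd_of_dvd_mul_right hbkw

lemma periodic_isCoprime (N : ℤ) : Function.Periodic (· ∈ {w : ℤ | IsCoprime w N}) N := by
  intro w
  change IsCoprime (w + N) N = IsCoprime w N
  simpa only [mul_one] using propext (IsCoprime.add_mul_left_left_iff (x := w) (y := N) (z := 1))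

lemma disjoint_image_mul_of_isCoprime {k l : ℕ} {N : ℤ} (hk : (k : ℤ) ∣ N) (hl : (l : ℤ) ∣ N)
    (hkl : k ≠ l) :
    Disjoint (((k : ℤ) * ·) '' {w | IsCoprime w N}) (((l : ℤ) * ·) '' {w | IsCoprime w N}) := by
  rw [disjoint_left]
  rintro _ ⟨v, hv, rfl⟩ ⟨w, hw, hvw : (l : ℤ) * w = k * v⟩
  refine hkl (Nat.dvd_antisymm (Int.natCast_dvd_natCast.1 ?_) (Int.natCast_dvd_natCast.1 ?_))
  · exact (hw.of_isCoprime_of_dvd_right hk).symm.dvd_of_dvd_mul_right ⟨v, hvw⟩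
  · exact (hv.of_isCoprime_of_dvd_right hl).symm.dvd_of_dvd_mul_right ⟨w, hvw.symm⟩

lemma primeFactors_factorial (n : ℕ) : n.factorial.primeFactors = Nat.primesLE n := by
  ext p
  rw [Nat.mem_primeFactors, Nat.mem_primesLE]
  exact ⟨fun ⟨hp, h, _⟩ ↦ ⟨hp.dvd_factorial.1 h, hp⟩,
    fun ⟨h, hp⟩ ↦ ⟨hp, hp.dvd_factorial.2 h, n.factorial_ne_zero⟩⟩

lemma prod_primesLE_one_sub_inv_pos (n : ℕ) : 0 < ∏ p ∈ Nat.primesLE n, (1 - (p : ℝ)⁻¹) :=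
  Finset.prod_pos fun p hp ↦ sub_pos.2 <|
    inv_lt_one_of_one_lt₀ (by exact_mod_cast (Nat.prime_of_mem_primesLE hp).one_lt)

namespace IsInvariantMean

variable {μ : Set ℤ → ℝ}

lemma map_isCoprime (hμ : IsInvariantMean μ) {N : ℕ} (hN : 0 < N) :
    μ {w | IsCoprime w (N : ℤ)} = N.totient / N := by
  rw [hμ.map_of_periodic hN (periodic_isCoprime N), Nat.count_eq_card_filter_range]
  simp only [mem_ofPred_eq, Nat.isCoprime_iff_coprime, Nat.coprime_comm, Nat.totient]

lemma map_isCoprime_factorial (hμ : IsInvariantMean μ) (n : ℕ) :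
    μ {w | IsCoprime w (n.factorial : ℤ)} = ∏ p ∈ Nat.primesLE n, (1 - (p : ℝ)⁻¹) := by
  have htotient := congrArg (Rat.cast : ℚ → ℝ) (Nat.totient_eq_mul_prod_factors n.factorial)
  rw [primeFactors_factorial] at htotient
  push_cast at htotient
  rw [hμ.map_isCoprime n.factorial_pos, htotient,
    mul_div_cancel_left₀ _ (by exact_mod_cast n.factorial_ne_zero)]

lemma prod_primesLE_mul_sum_indicator_inv_le (hμ : IsInvariantMean μ) {U V : Set ℤ} {x : ℕ}
    (hUV : ∀ k : ℕ, 1 ≤ k → k ≤ x → (k : ℤ) ∈ V →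
      ∀ w : ℤ, IsCoprime w (x.factorial : ℤ) → k * w ∈ U) :
    (∏ p ∈ Nat.primesLE x, (1 - (p : ℝ)⁻¹)) *
      ∑ k ∈ Finset.Icc 1 x, V.indicator (fun m : ℤ ↦ (m : ℝ)⁻¹) (k : ℤ) ≤ μ U := by
  set W : Set ℤ := {w | IsCoprime w (x.factorial : ℤ)}
  set s := (Finset.Icc 1 x).filter fun k : ℕ ↦ (k : ℤ) ∈ V with hs
  have hs_mem : ∀ k ∈ s, 1 ≤ k ∧ k ≤ x ∧ (k : ℤ) ∈ V := by simp [hs, and_assoc]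
  have hdvd : ∀ k ∈ s, (k : ℤ) ∣ (x.factorial : ℤ) := fun k hk ↦
    Int.natCast_dvd_natCast.2 (Nat.dvd_factorial (hs_mem k hk).1 (hs_mem k hk).2.1)
  calc _ = ∑ k ∈ s, μ W / k := by
        rw [← hμ.map_isCoprime_factorial, Finset.mul_sum, hs, Finset.sum_filter]
        simp only [indicator, mul_ite, mul_zero, div_eq_mul_inv, Int.cast_natCast]
        rfl
    _ = ∑ k ∈ s, μ (((k : ℤ) * ·) '' W) := Finset.sum_congr rfl fun k hk ↦
        (hμ.map_image_mul_of_periodic (hs_mem k hk).1 x.factorial_pos (periodic_isCoprime _)).symm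
    _ = μ (⋃ k ∈ s, ((k : ℤ) * ·) '' W) := (hμ.map_biUnion fun k hk l hl hkl ↦
        disjoint_image_mul_of_isCoprime (hdvd k hk) (hdvd l hl) hkl).symm
    _ ≤ μ U := hμ.mono <| iUnion₂_subset fun k hk ↦ image_subset_iff.2 fun w hw ↦
        hUV k (hs_mem k hk).1 (hs_mem k hk).2.1 (hs_mem k hk).2.2 w hw

end IsInvariantMean

lemma exists_logWeight_le_mul : ∃ K : ℝ, 0 < K ∧ ∀ μ : Set ℤ → ℝ, IsInvariantMean μ →
    ∀ x : ℕ, 3 ≤ x → ∀ U V : Set ℤ,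
      (∀ k : ℕ, 1 ≤ k → k ≤ x → (k : ℤ) ∈ V →
        ∀ w : ℤ, IsCoprime w (x.factorial : ℤ) → k * w ∈ U) →
      logWeight V x ≤ K * μ U := by
  obtain ⟨K, hK, hmertens⟩ := exists_prod_primesLE_one_sub_inv_inv_le_mul_log
  refine ⟨K, hK, fun μ hμ x hx U V hUV ↦ ?_⟩
  have hlog : 0 < Real.log x := Real.log_pos (by exact_mod_cast (by omega : 1 < x))
  have hsum := (le_inv_mul_iff₀ (prod_primesLE_one_sub_inv_pos x)).2
    (hμ.prod_primesLE_mul_sum_indicator_inv_le hUV)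
  rw [← Finset.prod_inv_distrib] at hsum
  rw [logWeight, inv_mul_le_iff₀ hlog]
  calc _ ≤ (∏ p ∈ Nat.primesLE x, (1 - (p : ℝ)⁻¹)⁻¹) * μ U := hsum
    _ ≤ K * Real.log x * μ U := mul_le_mul_of_nonneg_right (hmertens x hx) (hμ.nonneg U)
    _ = Real.log x * (K * μ U) := by ring

theorem exists_finset_eventually_logWeight_multiplesZ_sdiff_le {C : Set ℕ} (h0 : 0 ∉ C) {ε : ℝ}
    (hε : 0 < ε) : ∃ F : Finset ℕ, (F : Set ℕ) ⊆ C ∧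
      ∀ᶠ n in atTop, logWeight (multiplesZ C \ multiplesZ F) n ≤ ε := by
  obtain ⟨K, hK, hweight⟩ := exists_logWeight_le_mul
  have hμ := isInvariantMean_logMean Nat.hyperfilter_le_atTop
  set μ := logMean (hyperfilter ℕ)
  set values : Set ℝ := (fun F : Finset ℕ ↦ μ (multiplesZ F)) '' {F | (F : Set ℕ) ⊆ C}
  have hbdd : BddAbove values := ⟨1, forall_mem_image.2 fun F _ ↦ hμ.le_one _⟩
  have hne : values.Nonempty := ⟨_, ∅, by simp, rfl⟩
  obtain ⟨_, ⟨F, hFC, rfl⟩, hF⟩ :=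
    exists_lt_of_lt_csSup hne (sub_lt_self (sSup values) (div_pos hε hK))
  refine ⟨F, hFC, ?_⟩
  filter_upwards [eventually_ge_atTop 3, eventually_ge_atTop (F.sup id)] with x hx hFx
  have hpos : ∀ c ∈ C, 0 < c := fun c hc ↦ Nat.pos_of_ne_zero fun h ↦ h0 (h ▸ hc)
  have hFdvd : ∀ f ∈ (F : Set ℕ), (f : ℤ) ∣ (x.factorial : ℤ) := fun f hf ↦
    Int.natCast_dvd_natCast.2 <|
      Nat.dvd_factorial (hpos f (hFC hf)) ((Finset.le_sup (f := id) hf).trans hFx)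
  set G := F ∪ (Finset.Icc 1 x).filter (· ∈ C)
  have hGC : (G : Set ℕ) ⊆ C := by
    simp only [G, Finset.coe_union, Finset.coe_filter]
    exact union_subset hFC fun c hc ↦ hc.2
  have hFG : μ (multiplesZ G \ multiplesZ F) ≤ ε / K := by
    rw [hμ.map_sdiff (multiplesZ_mono (Finset.coe_subset.2 Finset.subset_union_left))]
    linarith [le_csSup hbdd ⟨G, hGC, rfl⟩]
  refine (hweight μ hμ x hx (multiplesZ G \ multiplesZ F) _ ?_).trans
    ((le_div_iff₀' hK).1 hFG)
  rintro k hk hkx ⟨⟨c, hc, hck⟩, hkF⟩ w hw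
  have hcx : c ≤ x := (Nat.le_of_dvd hk (Int.natCast_dvd_natCast.1 hck)).trans hkx
  refine mul_mem_multiplesZ_sdiff hFdvd ⟨⟨c, ?_, hck⟩, hkF⟩ hw
  simp only [G, Finset.coe_union, Finset.coe_filter, Finset.mem_Icc]
  exact Or.inr ⟨⟨hpos c hc, hcx⟩, hc⟩

section DavenportErdos

variable {𝒰 : Ultrafilter ℕ} {C : Set ℕ}

lemma exists_finset_logMean_multiplesZ_sdiff_le (h𝒰 : (𝒰 : Filter ℕ) ≤ atTop) (h0 : 0 ∉ C)
    {ε : ℝ} (hε : 0 < ε) :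
    ∃ F : Finset ℕ, (F : Set ℕ) ⊆ C ∧ logMean 𝒰 (multiplesZ C \ multiplesZ F) ≤ ε := by
  obtain ⟨F, hFC, hF⟩ := exists_finset_eventually_logWeight_multiplesZ_sdiff_le h0 hε
  exact ⟨F, hFC, le_of_tendsto (tendsto_logMean h𝒰 _) (hF.filter_mono h𝒰)⟩

lemma prod_id_pos_of_subset (h0 : 0 ∉ C) {F : Finset ℕ} (hFC : (F : Set ℕ) ⊆ C) :
    0 < ∏ b ∈ F, b :=
  Finset.prod_pos fun _ hb ↦ Nat.pos_of_ne_zero fun h ↦ h0 (hFC (h ▸ hb))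

theorem logMean_multiplesZ_le (h𝒰 : (𝒰 : Filter ℕ) ≤ atTop) (h0 : 0 ∉ C) {ν : Set ℤ → ℝ}
    (hν : IsInvariantMean ν) : logMean 𝒰 (multiplesZ C) ≤ ν (multiplesZ C) := by
  have hμ := isInvariantMean_logMean h𝒰
  refine le_of_forall_pos_le_add fun ε hε ↦ ?_
  obtain ⟨F, hFC, hF⟩ := exists_finset_logMean_multiplesZ_sdiff_le h𝒰 h0 hε
  rw [hμ.map_sdiff (multiplesZ_mono hFC), hμ.eq_of_periodic hν (prod_id_pos_of_subset h0 hFC)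
    (periodic_mem_multiplesZ_coe_finset F)] at hF
  linarith [hν.mono (multiplesZ_mono hFC)]

theorem hasLogDensity_multiplesZ (h𝒰 : (𝒰 : Filter ℕ) ≤ atTop) (h0 : 0 ∉ C) :
    HasLogDensity (multiplesZ C) (logMean 𝒰 (multiplesZ C)) := by
  refine (tendsto_iff_ultrafilter _ _ _).2 fun 𝒱 h𝒱 ↦ ?_
  have heq : logMean 𝒰 (multiplesZ C) = logMean 𝒱 (multiplesZ C) :=
    (logMean_multiplesZ_le h𝒰 h0 (isInvariantMean_logMean h𝒱)).antisymm
      (logMean_multiplesZ_le h𝒱 h0 (isInvariantMean_logMean h𝒰))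
  rw [heq]
  exact tendsto_logMean h𝒱 _

lemma logDensLow_multiplesZ (h𝒰 : (𝒰 : Filter ℕ) ≤ atTop) (h0 : 0 ∉ C) :
    logDensLow (multiplesZ C) = logMean 𝒰 (multiplesZ C) :=
  (hasLogDensity_multiplesZ h𝒰 h0).liminf_eq

theorem logMean_multiplesZ_inter (h𝒰 : (𝒰 : Filter ℕ) ≤ atTop) (h0 : 0 ∉ C) {q : ℕ} (hq : 0 < q)
    (hC : ∀ c ∈ C, c.Coprime q) {A : Set ℤ} (hA : Function.Periodic (· ∈ A) (q : ℤ)) :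
    logMean 𝒰 (multiplesZ C ∩ A) = logMean 𝒰 (multiplesZ C) * logMean 𝒰 A := by
  have hμ := isInvariantMean_logMean h𝒰
  have hle : ∀ A : Set ℤ, Function.Periodic (· ∈ A) (q : ℤ) →
      logMean 𝒰 (multiplesZ C ∩ A) ≤ logMean 𝒰 (multiplesZ C) * logMean 𝒰 A := by
    intro A hA
    refine le_of_forall_pos_le_add fun ε hε ↦ ?_
    obtain ⟨F, hFC, hF⟩ := exists_finset_logMean_multiplesZ_sdiff_le h𝒰 h0 hε
    have hsub : multiplesZ C ∩ A ⊆ multiplesZ F ∩ A ∪ multiplesZ C \ multiplesZ F := by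
      intro n hn
      by_cases hnF : n ∈ multiplesZ F
      exacts [Or.inl ⟨hnF, hn.2⟩, Or.inr ⟨hn.1, hnF⟩]
    calc logMean 𝒰 (multiplesZ C ∩ A)
        ≤ logMean 𝒰 (multiplesZ F ∩ A) + logMean 𝒰 (multiplesZ C \ multiplesZ F) :=
          (hμ.mono hsub).trans (hμ.union_le _ _)
      _ ≤ logMean 𝒰 (multiplesZ F) * logMean 𝒰 A + ε := by
          rw [hμ.map_inter_of_coprime hq (Nat.Coprime.prod_left fun b hb ↦ hC b (hFC hb))
            (periodic_mem_multiplesZ_coe_finset F) hA]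
          gcongr
      _ ≤ logMean 𝒰 (multiplesZ C) * logMean 𝒰 A + ε := by
          gcongr
          exacts [hμ.nonneg A, hμ.mono (multiplesZ_mono hFC)]
  refine (hle A hA).antisymm ?_
  have hcompl := hle Aᶜ fun n ↦ congrArg Not (hA n)
  have hsplit := hμ.map_union (multiplesZ C ∩ A) (multiplesZ C ∩ Aᶜ)
    (disjoint_compl_right.mono inter_subset_right inter_subset_right)
  rw [inter_union_compl] at hsplit
  rw [hμ.map_compl] at hcompl
  linarith

end DavenportErdos

/-! ### The zero–one law and tautness -/

section ZeroOne

variable {𝒰 : Ultrafilter ℕ} {C : Set ℕ}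

lemma Btilde_subset (C : Set ℕ) (N : ℕ) : Btilde C N ⊆ C := fun _ hc ↦ hc.1

lemma antitone_Btilde (C : Set ℕ) : Antitone (Btilde C) :=
  fun _ _ h _ hc ↦ ⟨hc.1, fun p hp hpc ↦ h.trans_lt (hc.2 p hp hpc)⟩

lemma coprime_of_mem_Btilde {N c q : ℕ} (hc : c ∈ Btilde C N)
    (hq : ∀ p : ℕ, p.Prime → p ∣ q → p ≤ N) : c.Coprime q :=
  Nat.coprime_of_dvd fun p hp hpc hpq ↦ (hc.2 p hp hpc).not_ge (hq p hp hpq)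

lemma logMean_freeZ_Btilde_le_mul (h𝒰 : (𝒰 : Filter ℕ) ≤ atTop) (h0 : 0 ∉ C) {α : ℝ}
    (hα : ∀ N, α ≤ logMean 𝒰 (multiplesZ (Btilde C N))) (k : ℕ) :
    logMean 𝒰 (freeZ (Btilde C k)) ≤ (1 - α) * logMean 𝒰 (freeZ (Btilde C k)) := by
  have hμ := isInvariantMean_logMean h𝒰
  have h0' : ∀ N, 0 ∉ Btilde C N := fun N h ↦ h0 (Btilde_subset C N h)
  have hα1 : 0 ≤ 1 - α := sub_nonneg.2 ((hα 0).trans (hμ.le_one _))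
  refine le_of_forall_pos_le_add fun ε hε ↦ ?_
  obtain ⟨F, hF, hFε⟩ := exists_finset_logMean_multiplesZ_sdiff_le h𝒰 (h0' k)
    (div_pos hε (by linarith : 0 < 1 - α + 1))
  have hFfree : logMean 𝒰 (freeZ F) ≤ logMean 𝒰 (freeZ (Btilde C k)) + ε / (1 - α + 1) := by
    rw [hμ.map_sdiff (multiplesZ_mono hF)] at hFε
    rw [freeZ, freeZ, hμ.map_compl, hμ.map_compl]
    linarith
  set q := ∏ b ∈ F, b
  have hq : 0 < q := prod_id_pos_of_subset (h0' k) hF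
  set T := Btilde C (max k q)
  have hindep := logMean_multiplesZ_inter h𝒰 (h0' (max k q)) hq (A := freeZ F)
    (fun c hc ↦ coprime_of_mem_Btilde hc fun p _ hpq ↦
      (Nat.le_of_dvd hq hpq).trans (le_max_right _ _))
    fun n ↦ congrArg Not (periodic_mem_multiplesZ_coe_finset F n)
  have hsub : freeZ (Btilde C k) ⊆ freeZ F \ (multiplesZ T ∩ freeZ F) := fun n hn ↦
    ⟨fun h ↦ hn (multiplesZ_mono hF h),
      fun h ↦ hn (multiplesZ_mono (antitone_Btilde C (le_max_left _ _)) h.1)⟩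
  calc logMean 𝒰 (freeZ (Btilde C k))
      ≤ (1 - logMean 𝒰 (multiplesZ T)) * logMean 𝒰 (freeZ F) := by
        refine (hμ.mono hsub).trans_eq ?_
        rw [hμ.map_sdiff inter_subset_right, hindep]
        ring
    _ ≤ (1 - α) * (logMean 𝒰 (freeZ (Btilde C k)) + ε / (1 - α + 1)) :=
        mul_le_mul (by linarith [hα (max k q)]) hFfree (hμ.nonneg _) hα1
    _ ≤ (1 - α) * logMean 𝒰 (freeZ (Btilde C k)) + ε := by
        rw [mul_add, mul_div_assoc']
        gcongr
        exact (div_le_iff₀ (by linarith)).2 (by linarith)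

theorem logMean_multiplesZ_Btilde_zero_one (h𝒰 : (𝒰 : Filter ℕ) ≤ atTop) (h0 : 0 ∉ C) :
    (∀ N, logMean 𝒰 (multiplesZ (Btilde C N)) = 1) ∨
      Tendsto (fun N ↦ logMean 𝒰 (multiplesZ (Btilde C N))) atTop (𝓝 0) := by
  have hμ := isInvariantMean_logMean h𝒰
  set m : ℕ → ℝ := fun N ↦ logMean 𝒰 (multiplesZ (Btilde C N))
  have hanti : Antitone m := fun _ _ h ↦ hμ.mono (multiplesZ_mono (antitone_Btilde C h))
  have hbdd : BddBelow (range m) := ⟨0, forall_mem_range.2 fun N ↦ hμ.nonneg _⟩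
  rcases (le_ciInf fun N ↦ hμ.nonneg _ : 0 ≤ ⨅ N, m N).eq_or_lt with hzero | hpos
  · exact Or.inr (hzero ▸ tendsto_atTop_ciInf hanti hbdd)
  · refine Or.inl fun N ↦ (hμ.le_one _).antisymm ?_
    have hfree := logMean_freeZ_Btilde_le_mul h𝒰 h0 (fun N ↦ ciInf_le hbdd N) N
    have : logMean 𝒰 (freeZ (Btilde C N)) ≤ 0 := by nlinarith
    rw [freeZ, hμ.map_compl] at this
    linarith

end ZeroOne

section Taut

variable {𝒰 : Ultrafilter ℕ} {B : Set ℕ}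

lemma logMean_image_mul_freeZ_le (h𝒰 : (𝒰 : Filter ℕ) ≤ atTop) {C : Set ℕ} (h0 : 0 ∉ C) {d : ℕ}
    (hd : 0 < d) : logMean 𝒰 (((d : ℤ) * ·) '' freeZ C) ≤ logMean 𝒰 (freeZ C) / d := by
  have hμ := isInvariantMean_logMean h𝒰
  have hν := hμ.scale hd
  rw [le_div_iff₀' (by exact_mod_cast hd), freeZ, hμ.map_compl]
  exact (hν.map_compl _).trans_le (sub_le_sub_left (logMean_multiplesZ_le h𝒰 h0 hν) 1)

lemma multiplesZ_sdiff_subset_image_freeZ_Btilde {c d : ℕ} (hd : 0 < d) (hc0 : c ≠ 0)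
    (hc1 : c ≠ 1) :
    multiplesZ B \ multiplesZ (B \ {d * c}) ⊆
      ((d : ℤ) * ·) '' freeZ (Btilde {c | d * c ∈ B} c) := by
  rintro n ⟨⟨b, hb, hbn⟩, hn⟩
  obtain rfl : b = d * c := by
    by_contra hne
    exact hn ⟨b, ⟨hb, hne⟩, hbn⟩
  obtain ⟨t, rfl⟩ := hbn
  refine ⟨c * t, ?_, by push_cast; ring⟩
  rintro ⟨f, ⟨hfB, hf⟩, hft⟩
  refine hn ⟨d * f, ⟨hfB, fun hfc ↦ ?_⟩, ?_⟩
  · obtain rfl : f = c := Nat.eq_of_mul_eq_mul_left hd hfc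
    have hlt := hf f.minFac (Nat.minFac_prime hc1) f.minFac_dvd
    exact hlt.not_ge (Nat.minFac_le (Nat.pos_of_ne_zero hc0))
  · push_cast
    rw [mul_assoc]
    exact mul_dvd_mul_left _ hft

theorem IsTaut.tendsto_logMean_multiplesZ_Btilde (htaut : IsTaut B) (hB0 : 0 ∉ B)
    (h𝒰 : (𝒰 : Filter ℕ) ≤ atTop) {d : ℕ} (hd : 0 < d) (hdB : d ∉ B) :
    Tendsto (fun N ↦ logMean 𝒰 (multiplesZ (Btilde {c | d * c ∈ B} N))) atTop (𝓝 0) := by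
  have hμ := isInvariantMean_logMean h𝒰
  have h0 : 0 ∉ {c | d * c ∈ B} := by simpa
  refine (logMean_multiplesZ_Btilde_zero_one h𝒰 h0).resolve_left fun hone ↦ ?_
  obtain ⟨c, hc⟩ : {c | d * c ∈ B}.Nonempty := by
    by_contra hempty
    have hnone : multiplesZ (Btilde {c | d * c ∈ B} 0) = ∅ :=
      eq_empty_of_forall_notMem fun _ ⟨c, hc, _⟩ ↦ hempty ⟨c, Btilde_subset _ _ hc⟩
    simpa [hnone, hμ.map_empty] using hone 0
  have hc0 : c ≠ 0 := fun h ↦ h0 (h ▸ hc)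
  have hc1 : c ≠ 1 := by
    rintro rfl
    exact hdB (by simpa using hc)
  have hlt := htaut (d * c) hc
  rw [logDensLow_multiplesZ h𝒰 hB0, logDensLow_multiplesZ h𝒰 fun h ↦ hB0 h.1, ← sub_pos,
    ← hμ.map_sdiff (multiplesZ_mono sdiff_subset)] at hlt
  refine hlt.not_ge ?_
  calc _ ≤ logMean 𝒰 (((d : ℤ) * ·) '' freeZ (Btilde {c | d * c ∈ B} c)) :=
        hμ.mono (multiplesZ_sdiff_subset_image_freeZ_Btilde hd hc0 hc1)
    _ ≤ logMean 𝒰 (freeZ (Btilde {c | d * c ∈ B} c)) / d :=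
        logMean_image_mul_freeZ_le h𝒰 (fun h ↦ h0 (Btilde_subset _ _ h)) hd
    _ = 0 := by rw [freeZ, hμ.map_compl, hone, sub_self, zero_div]

end Taut

/-! ### Prescribing patterns in the orbit of `η` -/

lemma exists_mem_coprime_of_infinite {S : Set ℕ} (hS : S.Infinite) (hcop : S.Pairwise Nat.Coprime)
    {q : ℕ} (hq : q ≠ 0) : ∃ s ∈ S, s.Coprime q := by
  by_contra! hcon
  refine infinite_of_injOn_mapsTo (f := fun s ↦ (s.gcd q).minFac) (t := q.primeFactors) ?_ ?_ hS
    (Finset.finite_toSet _)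
  · intro a ha c hc heq
    have hdvd (s : ℕ) : (s.gcd q).minFac ∣ s := (Nat.minFac_dvd _).trans (Nat.gcd_dvd_left _ _)
    by_contra hne
    refine Nat.not_coprime_of_dvd_of_dvd (Nat.minFac_prime (hcon a ha)).one_lt (hdvd a) ?_
      (hcop ha hc hne)
    exact heq.dvd.trans (hdvd c)
  · intro a ha
    exact Nat.mem_primeFactors.2
      ⟨Nat.minFac_prime (hcon a ha), (Nat.minFac_dvd _).trans (Nat.gcd_dvd_right _ _), hq⟩

lemma exists_modulus_forall_add_mem_multiplesZ {B : Set ℕ} (hB0 : 0 ∉ B)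
    (hcop : ∀ q ≠ 0, ∃ b ∈ B, b.Coprime q) {Q : ℕ} (hQ : 0 < Q) (Z : Finset ℤ) :
    ∃ (q : ℕ) (r : ℤ), 0 < q ∧ Q ∣ q ∧ (Q : ℤ) ∣ r ∧
      (∀ n ∈ Z, ∀ m : ℤ, m ≡ r [ZMOD q] → n + m ∈ multiplesZ B) ∧
      ∀ p : ℕ, p.Prime → p ∣ q → p ∣ Q ∨ ∃ n ∈ Z, (p : ℤ) ∣ n + r := by
  induction Z using Finset.induction_on with
  | empty => exact ⟨Q, 0, hQ, dvd_rfl, dvd_zero _, by simp, fun p _ hp ↦ Or.inl hp⟩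
  | insert a Z _ ih =>
    obtain ⟨q, r, hq, hQq, hQr, hZ, hprime⟩ := ih
    obtain ⟨b, hb, hbq⟩ := hcop q hq.ne'
    obtain ⟨u, v, huv⟩ : IsCoprime (b : ℤ) (q : ℤ) := Nat.isCoprime_iff_coprime.2 hbq
    set r' : ℤ := r + q * (v * (-a - r))
    have har : (b : ℤ) ∣ a + r' := ⟨u * (a + r), by linear_combination (-a - r) * huv⟩
    have hrr : r' ≡ r [ZMOD q] := Int.modEq_iff_dvd.2 ⟨-(v * (-a - r)), by ring⟩
    refine ⟨q * b, r', mul_pos hq (Nat.pos_of_ne_zero fun h ↦ hB0 (h ▸ hb)), hQq.mul_right b,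
      dvd_add hQr ((Int.natCast_dvd_natCast.2 hQq).mul_right _), fun n hn m hm ↦ ?_,
      fun p hp hpq ↦ ?_⟩
    · rw [Nat.cast_mul] at hm
      rcases Finset.mem_insert.1 hn with rfl | hn
      · exact ⟨b, hb, ((hm.of_mul_left _).add_left n).dvd_iff.2 har⟩
      · exact hZ n hn m ((hm.of_mul_right _).trans hrr)
    · rcases hp.dvd_mul.1 hpq with hpq | hpb
      · refine (hprime p hp hpq).imp_right fun ⟨n, hn, hpn⟩ ↦ ⟨n, Finset.mem_insert_of_mem hn, ?_⟩
        exact ((hrr.of_dvd (Int.natCast_dvd_natCast.2 hpq)).add_left n).dvd_iff.2 hpn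
      · exact Or.inr ⟨a, Finset.mem_insert_self _ _, (Int.natCast_dvd_natCast.2 hpb).trans har⟩

lemma exists_add_mem_multiplesZ_Btilde {B : Set ℕ} {n m : ℤ} {N : ℕ} (hn : n ≠ 0)
    (hN : n.natAbs ≤ N) (hm : ((N.factorial * N.factorial : ℕ) : ℤ) ∣ m)
    (hB : n + m ∈ multiplesZ B) :
    ∃ d ∈ n.natAbs.divisors, n + m ∈ multiplesZ (Btilde {c | d * c ∈ B} N) := by
  -- Since `n * N! ∣ m`, we have `n + m = n * u` with `u` congruent to `1` modulo `N!`, and the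
  -- cofactor in `b` of its part shared with `n` divides `u`.
  obtain ⟨b, hb, hbn⟩ := hB
  obtain ⟨e, he⟩ : n ∣ (N.factorial : ℤ) :=
    Int.dvd_natCast.2 (Nat.dvd_factorial (Int.natAbs_pos.2 hn) hN)
  obtain ⟨t, rfl⟩ := hm
  set u : ℤ := 1 + N.factorial * (e * t) with hu
  have hnu : n + (N.factorial * N.factorial : ℕ) * t = n * u := by
    rw [Nat.cast_mul, hu]
    linear_combination (N.factorial * t : ℤ) * he
  rw [hnu] at hbn ⊢
  obtain ⟨c, hc⟩ : b.gcd n.natAbs ∣ b := Nat.gcd_dvd_left _ _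
  have hd : b.gcd n.natAbs ≠ 0 := Nat.gcd_ne_zero_right (Int.natAbs_ne_zero.2 hn)
  have hcu : (c : ℤ) ∣ u := by
    have h : (b : ℤ) ∣ (b.gcd n.natAbs : ℕ) * u := Int.dvd_gcd_mul_iff_dvd_mul.2 hbn
    nth_rw 1 [hc] at h
    rw [Nat.cast_mul] at h
    exact Int.dvd_of_mul_dvd_mul_left (by exact_mod_cast hd) h
  refine ⟨b.gcd n.natAbs, Nat.mem_divisors.2 ⟨Nat.gcd_dvd_right _ _, Int.natAbs_ne_zero.2 hn⟩,
    c, ⟨by rwa [mem_ofPred_eq, ← hc], fun p hp hpc ↦ ?_⟩, hcu.mul_left n⟩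
  by_contra! hpN
  have hpu : (p : ℤ) ∣ u := (Int.natCast_dvd_natCast.2 hpc).trans hcu
  have hpfac : (p : ℤ) ∣ N.factorial := Int.natCast_dvd_natCast.2 (hp.dvd_factorial.2 hpN)
  exact (Nat.prime_iff_prime_int.1 hp).not_dvd_one
    ((dvd_add_left (hpfac.mul_right (e * t))).1 (hu ▸ hpu))

lemma exists_modEq_forall_add_notMem_multiplesZ {𝒰 : Ultrafilter ℕ} (h𝒰 : (𝒰 : Filter ℕ) ≤ atTop)
    {ι : Type*} {s : Finset ι} {T : ι → Set ℕ} {q : ℕ} (hq : 0 < q) (h0 : ∀ i ∈ s, 0 ∉ T i)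
    (hT : ∀ i ∈ s, ∀ c ∈ T i, c.Coprime q)
    (hsum : ∑ i ∈ s, logMean 𝒰 (multiplesZ (T i)) < 1) (a : ι → ℤ) (r : ℤ) :
    ∃ m : ℤ, m ≡ r [ZMOD q] ∧ ∀ i ∈ s, a i + m ∉ multiplesZ (T i) := by
  have hμ := isInvariantMean_logMean h𝒰
  have hclass (r : ℤ) : logMean 𝒰 {n | n ≡ r [ZMOD q]} = 1 / q := by
    have := hμ.map_inter_modEq hq (Nat.coprime_one_left q) (A := univ) (fun _ ↦ rfl) r
    rwa [univ_inter, hμ.map_univ] at this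
  have hper (r : ℤ) : Function.Periodic (· ∈ {n : ℤ | n ≡ r [ZMOD q]}) (q : ℤ) := fun n ↦
    congrArg (· = _) (Int.add_emod_right n q)
  let bad (i : ι) : Set ℤ := (· + a i) ⁻¹' (multiplesZ (T i) ∩ {n | n ≡ r + a i [ZMOD q]})
  have hbad : ∀ i ∈ s, logMean 𝒰 (bad i) = logMean 𝒰 (multiplesZ (T i)) / q := fun i hi ↦ by
    rw [hμ.map_preimage_add, logMean_multiplesZ_inter h𝒰 (h0 i hi) hq (hT i hi) (hper _), hclass,
      mul_one_div]
  by_contra! hcon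
  have hcover : {m | m ≡ r [ZMOD q]} ⊆ ⋃ i ∈ s, bad i := fun m hm ↦ by
    obtain ⟨i, hi, hmi⟩ := hcon m hm
    exact mem_biUnion hi ⟨by rwa [add_comm] at hmi, hm.add_right (a i)⟩
  have hle := (hμ.mono hcover).trans (hμ.biUnion_le s bad)
  rw [hclass, Finset.sum_congr rfl hbad, ← Finset.sum_div,
    div_le_div_iff_of_pos_right (by exact_mod_cast hq)] at hle
  exact hsum.not_ge hle

lemma IsTaut.eventually_sum_logMean_multiplesZ_Btilde_lt {𝒰 : Ultrafilter ℕ}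
    (h𝒰 : (𝒰 : Filter ℕ) ≤ atTop) {B : Set ℕ} (htaut : IsTaut B) (hB0 : 0 ∉ B) {A : Finset ℤ}
    (hA : ∀ n ∈ A, n ∈ freeZ B) {ε : ℝ} (hε : 0 < ε) :
    ∀ᶠ N in atTop, ∑ i ∈ A.sigma fun n ↦ n.natAbs.divisors,
      logMean 𝒰 (multiplesZ (Btilde {c | i.2 * c ∈ B} N)) < ε := by
  have hlim := tendsto_finsetSum (A.sigma fun n ↦ n.natAbs.divisors) fun i hi ↦ by
    obtain ⟨hn, hd⟩ := Finset.mem_sigma.1 hi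
    exact htaut.tendsto_logMean_multiplesZ_Btilde hB0 h𝒰 (Nat.pos_of_mem_divisors hd)
      fun hdB ↦ hA i.1 hn ⟨i.2, hdB, Int.natCast_dvd.2 (Nat.dvd_of_mem_divisors hd)⟩
  exact hlim.eventually_lt_const (by rwa [Finset.sum_const_zero])

lemma coprime_of_mem_Btilde_of_dvd_add {C : Set ℕ} {N c q : ℕ} {n m r : ℤ} {Z : Finset ℤ}
    (hc : c ∈ Btilde C N) (hcn : (c : ℤ) ∣ n + m) (hm : m ≡ r [ZMOD q]) (hnZ : n ∉ Z)
    (hN : ∀ n' ∈ Z, (n - n').natAbs ≤ N)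
    (hq : ∀ p : ℕ, p.Prime → p ∣ q → p ≤ N ∨ ∃ n' ∈ Z, (p : ℤ) ∣ n' + r) : c.Coprime q := by
  refine Nat.coprime_of_dvd fun p hp hpc hpq ↦ (hc.2 p hp hpc).not_ge ?_
  refine (hq p hp hpq).elim id fun ⟨n', hn', hpn'⟩ ↦ ?_
  have hpnm : (p : ℤ) ∣ n + m := (Int.natCast_dvd_natCast.2 hpc).trans hcn
  have hpnr : (p : ℤ) ∣ n + r := 
    ((hm.of_dvd (Int.natCast_dvd_natCast.2 hpq)).add_left n).dvd_iff.1 hpnm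
  have hpdiff : (p : ℤ) ∣ n - n' := by simpa using dvd_sub hpnr hpn'
  have hne : n - n' ≠ 0 := sub_ne_zero.2 fun h ↦ hnZ (h ▸ hn')
  exact (Nat.le_of_dvd (Int.natAbs_pos.2 hne) (Int.natCast_dvd.1 hpdiff)).trans (hN n' hn')

theorem IsTaut.exists_add_mem_freeZ_add_mem_multiplesZ {B : Set ℕ} (htaut : IsTaut B)
    (hB0 : 0 ∉ B) (hcop : ∀ q ≠ 0, ∃ b ∈ B, b.Coprime q) {A Z : Finset ℤ} (hAZ : Disjoint A Z)
    (hA : ∀ n ∈ A, n ∈ freeZ B) :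
    ∃ m : ℤ, (∀ n ∈ A, n + m ∈ freeZ B) ∧ ∀ n ∈ Z, n + m ∈ multiplesZ B := by
  have h𝒰 : (hyperfilter ℕ : Filter ℕ) ≤ atTop := Nat.hyperfilter_le_atTop
  have hA0 : ∀ n ∈ A, n ≠ 0 := by
    rintro n hn rfl
    obtain ⟨b, hb, -⟩ := hcop 1 one_ne_zero
    exact hA 0 hn ⟨b, hb, dvd_zero _⟩
  obtain ⟨N, ⟨hsum, hNA⟩, hNAZ⟩ :=
    (((htaut.eventually_sum_logMean_multiplesZ_Btilde_lt h𝒰 hB0 hA one_pos).and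
      (A.eventually_all.2 fun n _ ↦ eventually_ge_atTop n.natAbs)).and
      (A.eventually_all.2 fun n _ ↦ Z.eventually_all.2 fun n' _ ↦
        eventually_ge_atTop (n - n').natAbs)).exists
  have hfac := N.factorial_pos
  obtain ⟨q, r, hq, hQq, hQr, hZ, hprime⟩ :=
    exists_modulus_forall_add_mem_multiplesZ hB0 hcop (mul_pos hfac hfac) Z
  let T (i : Σ _ : ℤ, ℕ) : Set ℕ := {c ∈ Btilde {c | i.2 * c ∈ B} N | c.Coprime q}
  obtain ⟨m, hmr, hm⟩ := exists_modEq_forall_add_notMem_multiplesZ h𝒰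
    (s := A.sigma fun n ↦ n.natAbs.divisors) (T := T) hq (fun i _ h ↦ hB0 (by simpa using h.1.1))
    (fun i _ c hc ↦ hc.2) (hsum.trans_le' <| Finset.sum_le_sum fun i _ ↦
      (isInvariantMean_logMean h𝒰).mono (multiplesZ_mono (sep_subset _ _))) Sigma.fst r
  refine ⟨m, fun n hn hnB ↦ ?_, fun n hn ↦ hZ n hn m hmr⟩
  have hQm := (hmr.of_dvd (Int.natCast_dvd_natCast.2 hQq)).dvd_iff.2 hQr
  obtain ⟨d, hd, c, hc, hcn⟩ := exists_add_mem_multiplesZ_Btilde (hA0 n hn) (hNA n hn) hQm hnB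
  refine hm ⟨n, d⟩ (Finset.mem_sigma.2 ⟨hn, hd⟩) ⟨c, ⟨hc, ?_⟩, hcn⟩
  refine coprime_of_mem_Btilde_of_dvd_add hc hcn hmr (Finset.disjoint_left.1 hAZ hn)
    (hNAZ n hn) fun p hp hpq ↦ (hprime p hp hpq).imp_left fun hpQ ↦ ?_
  exact hp.dvd_factorial.1 ((hp.dvd_mul.1 hpQ).elim id id)

lemma mem_Xeta_iff {B : Set ℕ} {y : ℤ → Bool} :
    y ∈ Xeta B ↔ ∀ I : Finset ℤ, ∃ m : ℤ, ∀ n ∈ I, eta B (n + m) = y n := by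
  rw [Xeta, mem_closure_iff]
  constructor
  · intro h I
    obtain ⟨_, hz, m, rfl⟩ := h ((I : Set ℤ).pi fun n ↦ {y n})
      (isOpen_set_pi I.finite_toSet fun _ _ ↦ isOpen_discrete _) fun _ _ ↦ rfl
    exact ⟨m, hz⟩
  · intro h o ho hy
    obtain ⟨I, u, hu, hsub⟩ := isOpen_pi_iff.1 ho y hy
    obtain ⟨m, hm⟩ := h I
    exact ⟨_, hsub fun n hn ↦ mem_of_eq_of_mem (hm n hn) (hu n hn).2, m, rfl⟩

/-- If `B` is taut and contains an infinite pairwise coprime subset, then `X_η`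
is hereditary. -/
theorem Xeta_hereditary (B : Set ℕ) (hB0 : 0 ∉ B) (hprim : Primitive B) (htaut : IsTaut B)
    (hcop : ∃ S ⊆ B, S.Infinite ∧ ∀ a ∈ S, ∀ c ∈ S, a ≠ c → Nat.Coprime a c) :
    ∀ x ∈ Xeta B, ∀ y : ℤ → Bool, (∀ n : ℤ, y n ≤ x n) → y ∈ Xeta B := by
  obtain ⟨S, hSB, hS, hScop⟩ := hcop
  have hcoprime : ∀ q ≠ 0, ∃ b ∈ B, b.Coprime q := fun q hq ↦
    (exists_mem_coprime_of_infinite hS (fun a ha c hc ↦ hScop a ha c hc) hq).imp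
      fun _ hb ↦ hb.imp_left (@hSB _)
  intro x hx y hyx
  rw [mem_Xeta_iff] at hx ⊢
  intro I
  obtain ⟨k, hk⟩ := hx I
  let A : Finset ℤ := {n ∈ I | y n = true}.image (· + k)
  let Z : Finset ℤ := {n ∈ I | y n = false}.image (· + k)
  have hAZ : Disjoint A Z := (Finset.disjoint_image (add_left_injective k)).2
    (Finset.disjoint_filter.2 fun n _ hn ↦ by simp [hn])
  have hA : ∀ n ∈ A, n ∈ freeZ B := Finset.forall_mem_image.2 fun n hn ↦ by
    obtain ⟨hnI, hn⟩ := Finset.mem_filter.1 hn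
    have hle : true ≤ eta B (n + k) := hk n hnI ▸ hn ▸ hyx n
    exact of_decide_eq_true (top_le_iff.1 hle)
  obtain ⟨m, hmA, hmZ⟩ := htaut.exists_add_mem_freeZ_add_mem_multiplesZ hB0 hcoprime hAZ hA
  refine ⟨k + m, fun n hn ↦ ?_⟩
  rw [← add_assoc]
  cases hy : y n with
  | true =>
    have hnA : n + k ∈ A := Finset.mem_image_of_mem _ (Finset.mem_filter.2 ⟨hn, hy⟩)
    exact decide_eq_true (hmA _ hnA)
  | false =>
    have hnZ : n + k ∈ Z := Finset.mem_image_of_mem _ (Finset.mem_filter.2 ⟨hn, hy⟩)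
    exact decide_eq_false (not_not_intro (hmZ _ hnZ))
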